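/- arXiv:1808.08248 — 4 statements merged into one kernel-verified Lean document; each statement's English description precedes it below -/
import Mathlib

section
/- The element σ₃ belongs to the subgroup of H generated by the six elements σ₁σ₂σ₃σ₄σ₅, σ₁σ₄, σ₂σ₅, σ₃σ₆, σ₁σ₃σ₅ and σ₂σ₄σ₆. -/
/-!
Write `a = σ₁σ₂σ₃σ₄σ₅`, `b = σ₁σ₄`, `c = σ₂σ₅` and `f = σ₂σ₄σ₆`. Then `b⁻¹ * a * c⁻¹` is the
conjugate of `σ₃` by `σ₄⁻¹σ₂`. Left multiplication by `c⁻² * f` turns the conjugator `σ₄⁻¹σ₂` into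
`σ₅⁻²σ₆`, which commutes with `σ₃`; so conjugating `b⁻¹ * a * c⁻¹` by `c⁻² * f` gives back `σ₃`.
-/

section Group

variable {G : Type*} [Group G]

theorem mem_of_conj_mem_of_commute_mul {K : Subgroup G} {g h x : G} (hg : g ∈ K)
    (hx : h * x * h⁻¹ ∈ K) (hgh : Commute (g * h) x) : x ∈ K := by
  have conj_eq : g * (h * x * h⁻¹) * g⁻¹ = x := by
    calc g * (h * x * h⁻¹) * g⁻¹ = g * h * x * (g * h)⁻¹ := by group
      _ = x := hgh.mul_inv_cancel
  exact conj_eq ▸ K.mul_mem (K.mul_mem hg hx) (K.inv_mem hg)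

theorem inv_mul_mul_inv_eq_conj_of_commute (s₁ s₃ s₅ : G) {s₂ s₄ : G} (h24 : Commute s₂ s₄) :
    (s₁ * s₄)⁻¹ * (s₁ * s₂ * s₃ * s₄ * s₅) * (s₂ * s₅)⁻¹ =
      s₄⁻¹ * s₂ * s₃ * (s₄⁻¹ * s₂)⁻¹ := by
  calc (s₁ * s₄)⁻¹ * (s₁ * s₂ * s₃ * s₄ * s₅) * (s₂ * s₅)⁻¹
      = s₄⁻¹ * s₂ * s₃ * (s₄ * s₂⁻¹) := by group
    _ = s₄⁻¹ * s₂ * s₃ * (s₂⁻¹ * s₄) := by rw [h24.symm.inv_right.eq]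
    _ = s₄⁻¹ * s₂ * s₃ * (s₄⁻¹ * s₂)⁻¹ := by group

theorem inv_sq_mul_mul_eq_of_commute {s₂ s₄ s₅ s₆ : G} (h25 : Commute s₂ s₅)
    (h26 : Commute s₂ s₆) (h46 : Commute s₄ s₆) :
    ((s₂ * s₅) ^ 2)⁻¹ * (s₂ * s₄ * s₆) * (s₄⁻¹ * s₂) = (s₅ ^ 2)⁻¹ * s₆ := by
  have cancel_s₄ : s₂ * s₄ * s₆ * (s₄⁻¹ * s₂) = s₂ ^ 2 * s₆ := by
    calc s₂ * s₄ * s₆ * (s₄⁻¹ * s₂) = s₂ * (s₄ * s₆ * s₄⁻¹) * s₂ := by group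
      _ = s₂ * (s₆ * s₂) := by rw [h46.mul_inv_cancel, mul_assoc]
      _ = s₂ ^ 2 * s₆ := by rw [← h26.eq, sq, mul_assoc]
  calc ((s₂ * s₅) ^ 2)⁻¹ * (s₂ * s₄ * s₆) * (s₄⁻¹ * s₂)
      = (s₂ ^ 2 * s₅ ^ 2)⁻¹ * (s₂ ^ 2 * s₆) := by rw [mul_assoc, cancel_s₄, h25.mul_pow]
    _ = (s₅ ^ 2)⁻¹ * s₆ := by rw [mul_inv_rev, mul_assoc, inv_mul_cancel_left]

theorem sigma3_mem_subgroup_general (σ₁ : G) {σ₂ σ₃ σ₄ σ₅ σ₆ : G}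
    (h24 : Commute σ₂ σ₄) (h25 : Commute σ₂ σ₅) (h26 : Commute σ₂ σ₆)
    (h35 : Commute σ₃ σ₅) (h36 : Commute σ₃ σ₆) (h46 : Commute σ₄ σ₆) :
    σ₃ ∈ Subgroup.closure
      ({σ₁ * σ₂ * σ₃ * σ₄ * σ₅, σ₁ * σ₄, σ₂ * σ₅, σ₂ * σ₄ * σ₆} : Set G) := by
  set K := Subgroup.closure
    ({σ₁ * σ₂ * σ₃ * σ₄ * σ₅, σ₁ * σ₄, σ₂ * σ₅, σ₂ * σ₄ * σ₆} : Set G)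
  have ha : σ₁ * σ₂ * σ₃ * σ₄ * σ₅ ∈ K := Subgroup.subset_closure (by simp)
  have hb : σ₁ * σ₄ ∈ K := Subgroup.subset_closure (by simp)
  have hc : σ₂ * σ₅ ∈ K := Subgroup.subset_closure (by simp)
  have hf : σ₂ * σ₄ * σ₆ ∈ K := Subgroup.subset_closure (by simp)
  have conj_mem : σ₄⁻¹ * σ₂ * σ₃ * (σ₄⁻¹ * σ₂)⁻¹ ∈ K := by
    rw [← inv_mul_mul_inv_eq_conj_of_commute σ₁ σ₃ σ₅ h24]
    exact K.mul_mem (K.mul_mem (K.inv_mem hb) ha) (K.inv_mem hc)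
  have commute_conjugator :
      Commute (((σ₂ * σ₅) ^ 2)⁻¹ * (σ₂ * σ₄ * σ₆) * (σ₄⁻¹ * σ₂)) σ₃ := by
    rw [inv_sq_mul_mul_eq_of_commute h25 h26 h46]
    exact ((h35.pow_right 2).inv_right.mul_right h36).symm
  exact mem_of_conj_mem_of_commute_mul (K.mul_mem (K.inv_mem (K.pow_mem hc 2)) hf) conj_mem
    commute_conjugator

end Group

/-- In a group `H` with elements `σ₁, …, σ₆` such that `σᵢ` and `σⱼ` commute
for every cyclically non-adjacent pair of indices, the element `σ₃` belongs to the subgroup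
generated by `σ₁σ₂σ₃σ₄σ₅`, `σ₁σ₄`, `σ₂σ₅`, `σ₃σ₆`, `σ₁σ₃σ₅` and `σ₂σ₄σ₆`. -/
theorem sigma3_mem_subgroup {H : Type*} [Group H] (σ₁ σ₂ σ₃ σ₄ σ₅ σ₆ : H)
    (h13 : σ₁ * σ₃ = σ₃ * σ₁) (h14 : σ₁ * σ₄ = σ₄ * σ₁) (h15 : σ₁ * σ₅ = σ₅ * σ₁)
    (h24 : σ₂ * σ₄ = σ₄ * σ₂) (h25 : σ₂ * σ₅ = σ₅ * σ₂) (h26 : σ₂ * σ₆ = σ₆ * σ₂)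
    (h35 : σ₃ * σ₅ = σ₅ * σ₃) (h36 : σ₃ * σ₆ = σ₆ * σ₃) (h46 : σ₄ * σ₆ = σ₆ * σ₄) :
    σ₃ ∈ Subgroup.closure
      ({σ₁ * σ₂ * σ₃ * σ₄ * σ₅, σ₁ * σ₄, σ₂ * σ₅, σ₃ * σ₆, σ₁ * σ₃ * σ₅, σ₂ * σ₄ * σ₆} :
        Set H) := by
  exact Subgroup.closure_mono (by grind) (sigma3_mem_subgroup_general σ₁ h24 h25 h26 h35 h36 h46)
end

section
/- The subgroup of H generated by the six elements α, σ₁σ₄, σ₂σ₅, σ₃σ₆, σ₁σ₃σ₅ and σ₂σ₄σ₆ is equal to the subgroup of H generated by σ₁, σ₂, σ₃, σ₄, σ₅, σ₆. -/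
/-!
Write `g = σ₄ σ₅`, and let `K` be a subgroup containing `α`, `σ₁ σ₄`, `σ₂ σ₅` and `σ₂ σ₄ σ₆`.
Since `σ₂` and `σ₄` commute, the product of `σ₁ σ₄` and `σ₂ σ₅` is `α` with its middle factor `σ₃`
removed, so `g⁻¹ σ₃ g ∈ K`. On the other hand `g = σ₆ σ₁⁻² k` with
`k = (σ₁ σ₄)² (σ₂ σ₄ σ₆)⁻¹ (σ₂ σ₅) ∈ K`. As `σ₆ σ₁⁻²` commutes with `σ₃`, the element `g⁻¹ σ₃ g` is
just `k⁻¹ σ₃ k`, hence `σ₃ ∈ K`; conjugating by `α` yields the other `σᵢ`.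
-/

section Conjugation

variable {G : Type*} [Group G] {K : Subgroup G}

theorem conj_mem_iff_of_mem {k x : G} (hk : k ∈ K) : k * x * k⁻¹ ∈ K ↔ x ∈ K := by
  rw [K.mul_mem_cancel_right (inv_mem hk), K.mul_mem_cancel_left hk]

theorem mem_of_inv_conj_mem_of_commute {x c g : G} (hcx : Commute c x) (hcg : c⁻¹ * g ∈ K)
    (hxg : g⁻¹ * x * g ∈ K) : x ∈ K := by
  have hx : c⁻¹ * g * (g⁻¹ * x * g) * (c⁻¹ * g)⁻¹ = x := by
    calc c⁻¹ * g * (g⁻¹ * x * g) * (c⁻¹ * g)⁻¹ = c⁻¹ * (x * c) := by group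
      _ = x := by rw [← hcx.eq, inv_mul_cancel_left]
  exact hx ▸ (conj_mem_iff_of_mem hcg).2 hxg

end Conjugation

section SixElements

-- The letters `a, …, f` play the roles of `σ₁, …, σ₆`.
variable {G : Type*} [Group G] {a b c d e f : G}

theorem inv_mul_eq_inv_conj_of_commute (hbd : Commute b d) (a c e : G) :
    (a * d * (b * e))⁻¹ * (a * b * c * d * e) = (d * e)⁻¹ * c * (d * e) := by
  have hdelete : a * d * (b * e) = a * b * (d * e) := by
    simp only [mul_assoc, hbd.left_comm]
  rw [hdelete]
  group

theorem inv_mul_eq_sq_mul_inv_mul (had : Commute a d) (hdf : Commute d f) (b e : G) :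
    (f * (a ^ 2)⁻¹)⁻¹ * (d * e) = (a * d) ^ 2 * (b * d * f)⁻¹ * (b * e) := by
  calc (f * (a ^ 2)⁻¹)⁻¹ * (d * e) = a ^ 2 * (f⁻¹ * d) * e := by group
    _ = a ^ 2 * (d * f⁻¹) * e := by rw [hdf.inv_right.eq]
    _ = a ^ 2 * d ^ 2 * (d⁻¹ * f⁻¹) * e := by group
    _ = (a * d) ^ 2 * (f⁻¹ * d⁻¹) * e := by rw [had.mul_pow, hdf.inv_inv.eq]
    _ = (a * d) ^ 2 * (b * d * f)⁻¹ * (b * e) := by group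

theorem middle_mem_of_mul_mem_of_commute {K : Subgroup G}
    (hac : Commute a c) (had : Commute a d) (hbd : Commute b d) (hcf : Commute c f)
    (hdf : Commute d f) (habcde : a * b * c * d * e ∈ K) (hKad : a * d ∈ K) (hKbe : b * e ∈ K)
    (hKbdf : b * d * f ∈ K) : c ∈ K := by
  have hcomm : Commute (f * (a ^ 2)⁻¹) c := hcf.symm.mul_left (hac.pow_left 2).inv_left
  have hcoset : (f * (a ^ 2)⁻¹)⁻¹ * (d * e) ∈ K := by
    rw [inv_mul_eq_sq_mul_inv_mul had hdf b e]
    exact mul_mem (mul_mem (pow_mem hKad 2) (inv_mem hKbdf)) hKbe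
  have hconj : (d * e)⁻¹ * c * (d * e) ∈ K := by
    rw [← inv_mul_eq_inv_conj_of_commute hbd a c e]
    exact mul_mem (inv_mem (mul_mem hKad hKbe)) habcde
  exact mem_of_inv_conj_mem_of_commute hcomm hcoset hconj

end SixElements

/-- In a group `H` with elements `σ₁, …, σ₆` commuting for every cyclically
non-adjacent pair of indices, with `α = σ₁σ₂σ₃σ₄σ₅` satisfying the cyclic conjugation
relations `α σᵢ α⁻¹ = σ_{i+1}` (indices mod 6), the subgroup generated by
`α, σ₁σ₄, σ₂σ₅, σ₃σ₆, σ₁σ₃σ₅, σ₂σ₄σ₆` equals the subgroup generated by `σ₁, …, σ₆`. -/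
theorem closure_eq_closure {H : Type*} [Group H] (σ₁ σ₂ σ₃ σ₄ σ₅ σ₆ α : H)
    (h13 : σ₁ * σ₃ = σ₃ * σ₁) (h14 : σ₁ * σ₄ = σ₄ * σ₁) (h15 : σ₁ * σ₅ = σ₅ * σ₁)
    (h24 : σ₂ * σ₄ = σ₄ * σ₂) (h25 : σ₂ * σ₅ = σ₅ * σ₂) (h26 : σ₂ * σ₆ = σ₆ * σ₂)
    (h35 : σ₃ * σ₅ = σ₅ * σ₃) (h36 : σ₃ * σ₆ = σ₆ * σ₃) (h46 : σ₄ * σ₆ = σ₆ * σ₄)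
    (hα : α = σ₁ * σ₂ * σ₃ * σ₄ * σ₅)
    (hc1 : α * σ₁ * α⁻¹ = σ₂) (hc2 : α * σ₂ * α⁻¹ = σ₃) (hc3 : α * σ₃ * α⁻¹ = σ₄)
    (hc4 : α * σ₄ * α⁻¹ = σ₅) (hc5 : α * σ₅ * α⁻¹ = σ₆) (hc6 : α * σ₆ * α⁻¹ = σ₁) :
    Subgroup.closure ({α, σ₁ * σ₄, σ₂ * σ₅, σ₃ * σ₆, σ₁ * σ₃ * σ₅, σ₂ * σ₄ * σ₆} : Set H) =
      Subgroup.closure ({σ₁, σ₂, σ₃, σ₄, σ₅, σ₆} : Set H) := by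
  apply le_antisymm <;>
    simp only [Subgroup.closure_le, Set.insert_subset_iff, Set.singleton_subset_iff,
      SetLike.mem_coe]
  · have hσ := Subgroup.subset_closure (k := ({σ₁, σ₂, σ₃, σ₄, σ₅, σ₆} : Set H))
    simp only [Set.insert_subset_iff, Set.singleton_subset_iff, SetLike.mem_coe] at hσ
    obtain ⟨h₁, h₂, h₃, h₄, h₅, h₆⟩ := hσ
    exact ⟨hα ▸ mul_mem (mul_mem (mul_mem (mul_mem h₁ h₂) h₃) h₄) h₅, mul_mem h₁ h₄,
      mul_mem h₂ h₅, mul_mem h₃ h₆, mul_mem (mul_mem h₁ h₃) h₅, mul_mem (mul_mem h₂ h₄) h₆⟩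
  · set K := Subgroup.closure
      ({α, σ₁ * σ₄, σ₂ * σ₅, σ₃ * σ₆, σ₁ * σ₃ * σ₅, σ₂ * σ₄ * σ₆} : Set H)
    have hαK : α ∈ K := Subgroup.subset_closure (by simp)
    have h₃ : σ₃ ∈ K := middle_mem_of_mul_mem_of_commute h13 h14 h24 h36 h46 (hα ▸ hαK)
      (Subgroup.subset_closure (by simp)) (Subgroup.subset_closure (by simp))
      (Subgroup.subset_closure (by simp))
    have hconj {x y : H} (hxy : α * x * α⁻¹ = y) : y ∈ K ↔ x ∈ K :=
      hxy ▸ conj_mem_iff_of_mem hαK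
    have h₂ : σ₂ ∈ K := (hconj hc2).1 h₃
    have h₁ : σ₁ ∈ K := (hconj hc1).1 h₂
    have h₄ : σ₄ ∈ K := (hconj hc3).2 h₃
    have h₅ : σ₅ ∈ K := (hconj hc4).2 h₄
    exact ⟨h₁, h₂, h₃, h₄, h₅, (hconj hc5).2 h₅⟩
end

section
/- Let A be an element of the special orthogonal group SO(3) (a linear isometry of EuclideanSpace ℝ (Fin 3) with determinant 1) with A ≠ id. Then the fixed-point set of A on the unit sphere, {x ∈ S² | A x = x}, has exactly two elements. -/
/-!
Let `F` be the fixed subspace of an orthogonal map `A`, `P` the orthogonal projection onto `F`, and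
`B = A - 1 + P`. Since `A - 1` has kernel `F` and takes values in `Fᗮ`, the map `B` is invertible,
and `A Bᵀ = A (A⁻¹ - 1 + P) = 1 - A + P = B R`, where `R` is the reflection in `F`. Comparing
determinants, `det A = det R = (-1) ^ dim Fᗮ`. For a nontrivial rotation in dimension three,
`dim Fᗮ` is therefore even and nonzero, so `F` is a line, which meets the unit sphere in two points.
-/

open Module Submodule

theorem ncard_sphere_inter_eq_two_of_finrank_eq_one {E : Type*} [NormedAddCommGroup E]
    [NormedSpace ℝ E] {K : Submodule ℝ E} (hK : finrank ℝ K = 1) {r : ℝ} (hr : 0 < r) :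
    (Metric.sphere (0 : E) r ∩ K).ncard = 2 := by
  have : Nontrivial K := nontrivial_of_finrank_pos (R := ℝ) (by lia)
  have : IsAddTorsionFree E := .of_isTorsionFree ℝ E
  obtain ⟨u, hu⟩ := exists_norm_eq K hr.le
  have hu₀ : u ≠ 0 := norm_ne_zero_iff.mp (hu.trans_ne hr.ne')
  have hpair : Metric.sphere (0 : E) r ∩ K = {(u : E), -(u : E)} := by
    ext x
    simp only [Set.mem_inter_iff, mem_sphere_zero_iff_norm, SetLike.mem_coe, Set.mem_insert_iff,
      Set.mem_singleton_iff]
    constructor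
    · rintro ⟨hx, hxK⟩
      obtain ⟨c, hc⟩ := (finrank_eq_one_iff_of_nonzero' u hu₀).mp hK ⟨x, hxK⟩
      obtain rfl : c • (u : E) = x := congrArg Subtype.val hc
      have hc₁ : |c| = 1 := by
        rwa [norm_smul, Submodule.norm_coe, hu, Real.norm_eq_abs, mul_eq_right₀ hr.ne'] at hx
      rcases eq_or_eq_neg_of_abs_eq hc₁ with rfl | rfl <;> simp
    · rintro (rfl | rfl) <;> simpa using hu
  have hne : (u : E) ≠ -(u : E) := self_ne_neg.mpr (by simpa using hu₀)
  rw [hpair, Set.ncard_pair hne]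

section

variable {𝕜 E : Type*} [RCLike 𝕜] [NormedAddCommGroup E] [InnerProductSpace 𝕜 E]

theorem map_sub_self_mem_orthogonal_fixedSubmodule (A : E →ₗᵢ[𝕜] E) (x : E) :
    A x - x ∈ A.toLinearMap.fixedSubmoduleᗮ := by
  intro y hy
  have hAy : A y = y := hy
  calc
    inner 𝕜 y (A x - x) = inner 𝕜 (A y) (A x) - inner 𝕜 y x := by rw [inner_sub_right, hAy]
    _ = 0 := by rw [A.inner_map_map, sub_self]

/-- The operator `f - 1 + P`, where `P` is the orthogonal projection onto the fixed subspace of `f`: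
a modification of `f - 1` that is invertible when `f` is a linear isometry in finite dimension. -/
noncomputable def subOneAddFixedProjection (f : E →ₗ[𝕜] E)
    [f.fixedSubmodule.HasOrthogonalProjection] : E →ₗ[𝕜] E :=
  f - 1 + f.fixedSubmodule.starProjection

theorem subOneAddFixedProjection_injective (A : E →ₗᵢ[𝕜] E)
    [A.toLinearMap.fixedSubmodule.HasOrthogonalProjection] :
    Function.Injective (subOneAddFixedProjection A.toLinearMap) := by
  rw [injective_iff_map_eq_zero]
  intro x hx
  set F := A.toLinearMap.fixedSubmodule
  have hsum : (A x - x) + F.starProjection x = 0 := hx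
  have hproj : F.starProjection x = 0 := by
    refine disjoint_def.mp F.orthogonal_disjoint _ (F.starProjection_apply_mem x) ?_
    rw [← neg_eq_of_add_eq_zero_right hsum]
    exact neg_mem (map_sub_self_mem_orthogonal_fixedSubmodule A x)
  have hfixed : x ∈ F := by
    rw [hproj, add_zero] at hsum
    exact sub_eq_zero.mp hsum
  rw [← starProjection_eq_self_iff.mpr hfixed, hproj]

variable [FiniteDimensional 𝕜 E]

theorem det_adjoint (f : E →ₗ[𝕜] E) : LinearMap.det f.adjoint = star (LinearMap.det f) := by
  let b := stdOrthonormalBasis 𝕜 E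
  rw [← LinearMap.det_toMatrix b.toBasis, LinearMap.toMatrix_adjoint b b,
    Matrix.det_conjTranspose, LinearMap.det_toMatrix]

theorem adjoint_subOneAddFixedProjection (f : E →ₗ[𝕜] E) :
    (subOneAddFixedProjection f).adjoint =
      f.adjoint - 1 + (f.fixedSubmodule.starProjection : E →ₗ[𝕜] E) := by
  rw [subOneAddFixedProjection, map_add, map_sub, LinearMap.adjoint_one,
    f.fixedSubmodule.starProjection_isSymmetric.adjoint_eq]

theorem comp_adjoint_subOneAddFixedProjection (A : E ≃ₗᵢ[𝕜] E) :
    A.toLinearMap ∘ₗ (subOneAddFixedProjection A.toLinearMap).adjoint =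
      subOneAddFixedProjection A.toLinearMap ∘ₗ
        A.toLinearMap.fixedSubmodule.reflection.toLinearMap := by
  ext x
  set F := A.toLinearMap.fixedSubmodule
  have hAP : A (F.starProjection x) = F.starProjection x := F.starProjection_apply_mem x
  have hPP : F.starProjection (F.starProjection x) = F.starProjection x :=
    starProjection_eq_self_iff.mpr (F.starProjection_apply_mem x)
  calc
    A ((subOneAddFixedProjection A.toLinearMap).adjoint x)
      = A (A.symm x - x + F.starProjection x) := by
        rw [adjoint_subOneAddFixedProjection, A.adjoint_toLinearMap_eq_symm]
        rfl
    _ = x - A x + F.starProjection x := by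
        rw [map_add, map_sub, A.apply_symm_apply, hAP]
    _ = A (F.reflection x) - F.reflection x + F.starProjection (F.reflection x) := by
        simp only [Submodule.reflection_apply, map_sub, map_nsmul, hAP, hPP]
        module

end

theorem det_linearIsometryEquiv_eq_neg_one_pow {E : Type*} [NormedAddCommGroup E]
    [InnerProductSpace ℝ E] [FiniteDimensional ℝ E] (A : E ≃ₗᵢ[ℝ] E) :
    LinearMap.det A.toLinearMap = (-1) ^ finrank ℝ A.toLinearMap.fixedSubmoduleᗮ := by
  set B := subOneAddFixedProjection A.toLinearMap
  set R := A.toLinearMap.fixedSubmodule.reflection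
  have hB : LinearMap.det B ≠ 0 := by
    rw [Ne, LinearMap.det_eq_zero_iff_ker_ne_bot, not_not, LinearMap.ker_eq_bot]
    exact subOneAddFixedProjection_injective A.toLinearIsometry
  have hdet : LinearMap.det B * LinearMap.det A.toLinearMap =
      LinearMap.det B * LinearMap.det R.toLinearMap :=
    calc
      LinearMap.det B * LinearMap.det A.toLinearMap
        = LinearMap.det (A.toLinearMap ∘ₗ B.adjoint) := by
          rw [LinearMap.det_comp, det_adjoint, star_trivial, mul_comm]
      _ = LinearMap.det B * LinearMap.det R.toLinearMap := by
          rw [comp_adjoint_subOneAddFixedProjection, LinearMap.det_comp]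
  rw [mul_left_cancel₀ hB hdet, Submodule.det_reflection]

theorem finrank_fixedSubmodule_eq_one {E : Type*} [NormedAddCommGroup E] [InnerProductSpace ℝ E]
    (hE : finrank ℝ E = 3) (A : E ≃ₗᵢ[ℝ] E) (hdet : LinearMap.det A.toLinearMap = 1)
    (hA : A ≠ LinearIsometryEquiv.refl ℝ E) :
    finrank ℝ A.toLinearMap.fixedSubmodule = 1 := by
  have : FiniteDimensional ℝ E := .of_finrank_eq_succ hE
  set F := A.toLinearMap.fixedSubmodule with hF
  have heven : Even (finrank ℝ Fᗮ) := by
    rw [det_linearIsometryEquiv_eq_neg_one_pow] at hdet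
    exact neg_one_pow_eq_one_iff_even (by norm_num) |>.mp hdet
  have hne : finrank ℝ Fᗮ ≠ 0 := by
    rw [Ne, Submodule.finrank_eq_zero, orthogonal_eq_bot_iff, hF,
      LinearEquiv.fixedSubmodule_eq_top_iff]
    exact fun h ↦ hA (LinearIsometryEquiv.toLinearEquiv_injective h)
  have hsum : finrank ℝ F + finrank ℝ Fᗮ = 3 := F.finrank_add_finrank_orthogonal.trans hE
  obtain ⟨k, hk⟩ := heven
  lia

theorem rotation_two_fixed_points_general {E : Type*} [NormedAddCommGroup E]
    [InnerProductSpace ℝ E] (hE : finrank ℝ E = 3) (A : E ≃ₗᵢ[ℝ] E)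
    (hdet : LinearMap.det A.toLinearMap = 1) (hA : A ≠ LinearIsometryEquiv.refl ℝ E) :
    {x : E | x ∈ Metric.sphere (0 : E) 1 ∧ A x = x}.ncard = 2 :=
  ncard_sphere_inter_eq_two_of_finrank_eq_one
    (finrank_fixedSubmodule_eq_one hE A hdet hA) one_pos

/-- a nontrivial rotation `A ∈ SO(3)` (a linear isometry of `ℝ³` with
determinant `1`, not the identity) has exactly two fixed points on the unit sphere `S²`. -/
theorem rotation_two_fixed_points
    (A : EuclideanSpace ℝ (Fin 3) ≃ₗᵢ[ℝ] EuclideanSpace ℝ (Fin 3))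
    (hdet : LinearMap.det
      (A.toLinearEquiv : EuclideanSpace ℝ (Fin 3) →ₗ[ℝ] EuclideanSpace ℝ (Fin 3)) = 1)
    (hA : A ≠ LinearIsometryEquiv.refl ℝ (EuclideanSpace ℝ (Fin 3))) :
    ({x : EuclideanSpace ℝ (Fin 3) |
        x ∈ Metric.sphere (0 : EuclideanSpace ℝ (Fin 3)) 1 ∧ A x = x}).ncard = 2 :=
  rotation_two_fixed_points_general finrank_euclideanSpace_fin A hdet hA
end

section
/- Let U and V be open, simply connected subsets of the plane ℝ² (equivalently of ℂ). Then every connected component of U ∩ V, regarded as a topological subspace, is simply connected. -/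
/-!
Let `W` be a component of `U ∩ V`. A frontier point `p` of `W` is missing from `U` or from `V`, so
`z - p` has a logarithm on `W`; this is the only way in which simple connectedness of `U` and `V`
enters.

After rescaling, every loop in `W` is homotopic to a closed walk along edges of the unit grid in the
first quadrant. Consider the lexicographically largest vertex `v` of such a walk. Unless the walk
turns back at `v`, it passes through both `v - 1` and `v - i`, and the corner at `v` can be pushed
across the unit square below and to the left of `v`, provided that this square lies in `W`. If it
does not, then it contains a frontier point `p` of `W`. The edges from `v` to `v - 1` and `v - i`
avoid the ray from `p` opposite to `v`, while the rest of the walk, being lexicographically smaller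
than `v`, avoids the ray from `p` through `v`. Hence the walk has winding number `±1` around `p`,
which contradicts the existence of a logarithm of `z - p`. Since pushing replaces a vertex by a
smaller one, the process ends with the constant walk.
-/

open Set

section LogBranches

variable {X Y : Type*} [TopologicalSpace X] [TopologicalSpace Y] {f : X → ℂ} {S T : Set X}

/-- `HasLogOn f S` says that `f` has a continuous branch of logarithm on `S`. -/
def HasLogOn (f : X → ℂ) (S : Set X) : Prop :=
  ∃ L : X → ℂ, ContinuousOn L S ∧ EqOn (Complex.exp ∘ L) f S

theorem HasLogOn.mono (h : HasLogOn f T) (hST : S ⊆ T) : HasLogOn f S :=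
  let ⟨L, hL, hLf⟩ := h
  ⟨L, hL.mono hST, hLf.mono hST⟩

theorem HasLogOn.comp (h : HasLogOn f S) {k : Y → X} {K : Set Y} (hk : ContinuousOn k K)
    (hKS : MapsTo k K S) : HasLogOn (f ∘ k) K :=
  let ⟨L, hL, hLf⟩ := h
  ⟨L ∘ k, hL.comp hk hKS, fun _ hy ↦ hLf (hKS hy)⟩

theorem HasLogOn.const_mul (h : HasLogOn f S) {c : ℂ} (hc : c ≠ 0) :
    HasLogOn (fun x ↦ c * f x) S := by
  obtain ⟨L, hL, hLf⟩ := h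
  refine ⟨fun x ↦ Complex.log c + L x, continuousOn_const.add hL, fun x hx ↦ ?_⟩
  have hfx : Complex.exp (L x) = f x := hLf hx
  simp [Complex.exp_add, Complex.exp_log hc, hfx]

theorem hasLogOn_sub_const {U : Set ℂ} (hU : IsSimplyConnected U)
    (hUo : IsOpen U) {p : ℂ} (hp : p ∉ U) : HasLogOn (fun z ↦ z - p) U := by
  refine Complex.exists_continuousOn_eqOn_exp_comp hU hUo (by fun_prop) ?_
  rintro ⟨z, hz, hzp⟩
  exact hp (sub_eq_zero.1 hzp ▸ hz)

theorem log_branch_sub_eq_log_sub_log {L : X → ℂ} (hS : IsPreconnected S)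
    (hf : ContinuousOn f S) (hfS : MapsTo f S Complex.slitPlane) (hL : ContinuousOn L S)
    (hLf : EqOn (Complex.exp ∘ L) f S) {a b : X} (ha : a ∈ S) (hb : b ∈ S) :
    L b - L a = Complex.log (f b) - Complex.log (f a) := by
  have hexp {x : X} (hx : x ∈ S) : Complex.exp (L x) = f x := hLf hx
  have hne {x : X} (hx : x ∈ S) : f x ≠ 0 := Complex.slitPlane_ne_zero (hfS hx)
  have heq : EqOn L (fun x ↦ Complex.log (f x) + (L a - Complex.log (f a))) S := by
    refine Complex.isCoveringMap_exp.eqOn_of_comp_eqOn hS hL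
      ((hf.clog hfS).add continuousOn_const) (fun x hx ↦ Subtype.ext ?_) ha (by simp)
    simp [Complex.exp_add, Complex.exp_sub, Complex.exp_log (hne hx), Complex.exp_log (hne ha),
      hexp hx, hexp ha, hne ha]
  rw [heq hb]
  ring

theorem log_neg_of_im_pos {z : ℂ} (hz : 0 < z.im) :
    Complex.log (-z) = Complex.log z - Real.pi * Complex.I := by
  simp only [Complex.log, norm_neg, Complex.arg_neg_eq_arg_sub_pi_of_im_pos hz]
  push_cast
  ring

/-- From `a` to `b` a branch changes by `log (f b) - log (f a)` along `K₁` and by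
`log (-f b) - log (-f a)` along `K₂`, and these differ by `2πi`. -/
theorem not_hasLogOn_union {K₁ K₂ : Set X} (hK₁ : IsPreconnected K₁) (hK₂ : IsPreconnected K₂)
    (hf : ContinuousOn f (K₁ ∪ K₂)) (hf₁ : MapsTo f K₁ Complex.slitPlane)
    (hf₂ : MapsTo (-f) K₂ Complex.slitPlane) {a b : X} (ha : a ∈ K₁ ∩ K₂) (hb : b ∈ K₁ ∩ K₂)
    (hfa : 0 < (f a).im) (hfb : (f b).im < 0) : ¬HasLogOn f (K₁ ∪ K₂) := by
  rintro ⟨L, hL, hLf⟩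
  have h₁ := log_branch_sub_eq_log_sub_log hK₁ (hf.mono subset_union_left) hf₁
    (hL.mono subset_union_left) (hLf.mono subset_union_left) ha.1 hb.1
  have h₂ := log_branch_sub_eq_log_sub_log hK₂ (f := -f) (L := fun x ↦ L x + Real.pi * Complex.I)
    (hf.mono subset_union_right).neg hf₂ ((hL.mono subset_union_right).add continuousOn_const)
    (fun x hx ↦ by
      have hfx : Complex.exp (L x) = f x := hLf (Or.inr hx)
      simp [Complex.exp_add, hfx]) ha.2 hb.2
  have ha' := log_neg_of_im_pos hfa
  have hb' := log_neg_of_im_pos (z := -f b) (by simpa using hfb)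
  rw [neg_neg] at hb'
  simp only [Pi.neg_apply, ha'] at h₂
  have : (Real.pi : ℂ) * Complex.I = 0 := by linear_combination (h₁ + hb' - h₂) / 2
  simp [Real.pi_ne_zero] at this

end LogBranches

section WalkHom

open CategoryTheory SimpleGraph

variable {T C : Type*} [Groupoid C] {G : SimpleGraph T} {ob : T → C}

/-- The vertices entered by a walk, with multiplicity. The starting vertex is not counted, so that
rotating a closed walk does not change this multiset. -/
def enteredVertices {u w : T} (p : G.Walk u w) : Multiset T := p.support.tail

@[simp]
theorem enteredVertices_nil (u : T) : enteredVertices (.nil : G.Walk u u) = 0 := rfl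

@[simp]
theorem enteredVertices_append {u v w : T} (p : G.Walk u v) (q : G.Walk v w) :
    enteredVertices (p.append q) = enteredVertices p + enteredVertices q := by
  simp [enteredVertices, Walk.tail_support_append]

@[simp]
theorem enteredVertices_cons {u v w : T} (h : G.Adj u v) (p : G.Walk v w) :
    enteredVertices (p.cons h) = {v} + enteredVertices p := by
  rw [enteredVertices, Walk.support_cons, List.tail_cons, ← Walk.cons_tail_support,
    ← Multiset.cons_coe, Multiset.singleton_add, enteredVertices]

@[simp]
theorem enteredVertices_concat {u v w : T} (p : G.Walk u v) (h : G.Adj v w) :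
    enteredVertices (p.concat h) = enteredVertices p + {w} := by
  simp [Walk.concat_eq_append]

variable (φ : ∀ ⦃u w : T⦄, G.Adj u w → (ob u ⟶ ob w))

/-- The holonomy of a walk: the composite of the groupoid morphisms assigned to its edges. -/
def walkHom : ∀ {u w : T}, G.Walk u w → (ob u ⟶ ob w)
  | _, _, .nil => 𝟙 _
  | _, _, .cons h p => φ h ≫ walkHom p

@[simp]
theorem walkHom_nil (u : T) : walkHom φ (.nil : G.Walk u u) = 𝟙 (ob u) := rfl

@[simp]
theorem walkHom_cons {u v w : T} (h : G.Adj u v) (p : G.Walk v w) :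
    walkHom φ (p.cons h) = φ h ≫ walkHom φ p := rfl

@[simp]
theorem walkHom_append {u v w : T} (p : G.Walk u v) (q : G.Walk v w) :
    walkHom φ (p.append q) = walkHom φ p ≫ walkHom φ q := by
  induction p with
  | nil => simp
  | cons h p ih => simp [ih]

@[simp]
theorem walkHom_concat {u v w : T} (p : G.Walk u v) (h : G.Adj v w) :
    walkHom φ (p.concat h) = walkHom φ p ≫ φ h := by
  simp [Walk.concat_eq_append]

theorem exists_eq_cons_concat_of_not_nil {v : T} {p : G.Walk v v} (hp : ¬p.Nil) :
    ∃ (a b : T) (hva : G.Adj v a) (hbv : G.Adj b v) (q : G.Walk a b),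
      p = .cons hva (q.concat hbv) := by
  obtain ⟨a, hva, p, rfl⟩ := Walk.not_nil_iff.1 hp
  cases p with
  | nil => exact absurd rfl hva.ne
  | cons h p =>
    obtain ⟨b, q, hbv, hq⟩ := Walk.exists_cons_eq_concat h p
    exact ⟨a, b, hva, hbv, q, by rw [hq]⟩

theorem comp_eq_id_comm {A B : C} {f : A ⟶ B} {g : B ⟶ A} : f ≫ g = 𝟙 A ↔ g ≫ f = 𝟙 B := by
  rw [← IsIso.eq_inv_comp, ← IsIso.eq_comp_inv, Category.comp_id, Category.id_comp]

theorem isDershowitzMannaLT_of_eq_add [Preorder T] {M N Z : Multiset T} (hN : N = M + Z)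
    (hZ : Z ≠ 0) : M.IsDershowitzMannaLT N :=
  ⟨M, 0, Z, hZ, (add_zero M).symm, hN, by simp⟩

variable {φ} [LinearOrder T]

theorem walkHom_cons_concat_eq_id {v a b : T}
    (hinv : ∀ ⦃u w⦄ (h : G.Adj u w), φ h ≫ φ h.symm = 𝟙 (ob u))
    (hcorner : ∀ ⦃v a b⦄ (hva : G.Adj v a) (hbv : G.Adj b v) (q : G.Walk a b), a ≠ b →
      (∀ u ∈ q.support, u < v) → ∃ c < v, ∃ (hbc : G.Adj b c) (hca : G.Adj c a),
        φ hbv ≫ φ hva = φ hbc ≫ φ hca)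
    (hva : G.Adj v a) (hbv : G.Adj b v) (q : G.Walk a b) (hmax : ∀ u ∈ q.support, u ≤ v)
    (ih : ∀ ⦃u⦄ (p : G.Walk u u),
      (enteredVertices p).IsDershowitzMannaLT (enteredVertices (.cons hva (q.concat hbv))) →
        walkHom φ p = 𝟙 (ob u)) :
    walkHom φ (.cons hva (q.concat hbv)) = 𝟙 (ob v) := by
  simp only [enteredVertices_cons, enteredVertices_concat] at ih
  by_cases hvq : v ∈ q.support
  · obtain ⟨q₁, q₂, rfl⟩ := Walk.mem_support_iff_exists_append.1 hvq
    have h₁ := ih (.cons hva q₁) <|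
      isDershowitzMannaLT_of_eq_add (Z := enteredVertices q₂ + {v}) (by simp [add_assoc]) (by simp)
    have h₂ := ih (q₂.concat hbv) <|
      isDershowitzMannaLT_of_eq_add (Z := {a} + enteredVertices q₁) (by simp; abel) (by simp)
    simp_all
  have hlt : ∀ u ∈ q.support, u < v := fun u hu ↦
    (hmax u hu).lt_of_ne (ne_of_mem_of_not_mem hu hvq)
  by_cases hab : a = b
  · subst hab
    have hq := ih q <| isDershowitzMannaLT_of_eq_add (Z := {a} + {v}) (by abel) (by simp)
    simp [hq, hinv]
  · obtain ⟨c, hcv, hbc, hca, hsq⟩ := hcorner hva hbv q hab hlt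
    have hc := ih (.cons hca (q.concat hbc))
      ⟨{a} + enteredVertices q, {c}, {v}, by simp, by simp, by simp, by simpa⟩
    rw [walkHom_cons, walkHom_concat, comp_eq_id_comm, Category.assoc] at hc ⊢
    rw [hsq, hc]

/-- Induction on the multiset of entered vertices, in the Dershowitz–Manna order: rotate the walk to
its largest vertex `v`, then split it there, cancel a backtracking at `v`, or replace the corner at
`v` by a path through a smaller vertex. -/
theorem walkHom_eq_id_of_corner [WellFoundedLT T]
    (hinv : ∀ ⦃u w⦄ (h : G.Adj u w), φ h ≫ φ h.symm = 𝟙 (ob u))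
    (hcorner : ∀ ⦃v a b⦄ (hva : G.Adj v a) (hbv : G.Adj b v) (q : G.Walk a b), a ≠ b →
      (∀ u ∈ q.support, u < v) → ∃ c < v, ∃ (hbc : G.Adj b c) (hca : G.Adj c a),
        φ hbv ≫ φ hva = φ hbc ≫ φ hca)
    {u : T} (p : G.Walk u u) : walkHom φ p = 𝟙 (ob u) := by
  have hwf := Multiset.wellFounded_isDershowitzMannaLT (α := T)
  induction hM : enteredVertices p using hwf.induction generalizing u with
  | h M ih =>
  obtain ⟨v, hv, hmax⟩ := p.support.toFinset.exists_max_image id ⟨u, by simp⟩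
  simp only [List.mem_toFinset, id] at hv hmax
  obtain ⟨q₁, q₂, rfl⟩ := Walk.mem_support_iff_exists_append.1 hv
  rw [walkHom_append, comp_eq_id_comm, ← walkHom_append]
  rw [enteredVertices_append, add_comm, ← enteredVertices_append] at hM
  have hmax' : ∀ w ∈ (q₂.append q₁).support, w ≤ v := fun w hw ↦ hmax w <| by
    rwa [Walk.mem_support_append_iff, or_comm, ← Walk.mem_support_append_iff] at hw
  by_cases hnil : (q₂.append q₁).Nil
  · simp [hnil.eq_nil]
  obtain ⟨a, b, hva, hbv, q, hq⟩ := exists_eq_cons_concat_of_not_nil hnil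
  rw [hq] at hM hmax' ⊢
  exact walkHom_cons_concat_eq_id hinv hcorner hva hbv q
    (fun w hw ↦ hmax' w (by simp [Walk.support_concat, hw])) fun u p hp ↦ ih _ (hM ▸ hp) p rfl

end WalkHom

section SegmentClass

open CategoryTheory

variable {E : Type*} [AddCommGroup E] [Module ℝ E] [TopologicalSpace E] [IsTopologicalAddGroup E]
  [ContinuousSMul ℝ E] {B W : Set E}

theorem homotopic_of_range_subset_convex (hB : Convex ℝ B) (hBW : B ⊆ W) {a b : W}
    {γ γ' : Path a b} (hγ : ∀ t, (γ t : E) ∈ B) (hγ' : ∀ t, (γ' t : E) ∈ B) :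
    γ.Homotopic γ' := by
  have ha : (a : E) ∈ B := by simpa using hγ 0
  have hb : (b : E) ∈ B := by simpa using hγ 1
  have := hB.contractibleSpace ⟨_, ha⟩
  let lift (σ : Path a b) (hσ : ∀ t, (σ t : E) ∈ B) : Path (⟨a, ha⟩ : B) ⟨b, hb⟩ :=
    { toFun := fun t ↦ ⟨σ t, hσ t⟩, source' := by simp, target' := by simp }
  exact (SimplyConnectedSpace.paths_homotopic (lift γ hγ) (lift γ' hγ')).map
    ⟨inclusion hBW, continuous_inclusion hBW⟩

/-- The straight segment between two points of `W`, as a path in the subspace `W`. -/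
def segmentPath (a b : W) (h : segment ℝ (a : E) b ⊆ W) : Path a b where
  toFun t := ⟨Path.segment (a : E) b t, h (Path.range_segment (a : E) b ▸ mem_range_self t)⟩
  source' := by simp
  target' := by simp

/-- The homotopy class of `segmentPath`, as a morphism of the fundamental groupoid of `W`. -/
def segmentClass (a b : W) (h : segment ℝ (a : E) b ⊆ W) :
    FundamentalGroupoid.mk a ⟶ FundamentalGroupoid.mk b :=
  FundamentalGroupoid.fromPath (.mk (segmentPath a b h))

theorem segmentPath_mem (hB : Convex ℝ B) {a b : W} (h : segment ℝ (a : E) b ⊆ W) (ha : (a : E) ∈ B)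
    (hb : (b : E) ∈ B) (t : unitInterval) : (segmentPath a b h t : E) ∈ B :=
  hB.segment_subset ha hb (Path.range_segment (a : E) b ▸ mem_range_self t)

theorem fromPath_eq_segmentClass (hB : Convex ℝ B) (hBW : B ⊆ W) {a b : W} {γ : Path a b}
    (hγ : ∀ t, (γ t : E) ∈ B) (h : segment ℝ (a : E) b ⊆ W) :
    FundamentalGroupoid.fromPath (.mk γ) = segmentClass a b h :=
  (FundamentalGroupoid.fromPath_eq_iff_homotopic ..).2 <| homotopic_of_range_subset_convex hB hBW hγ
    (segmentPath_mem hB h (by simpa using hγ 0) (by simpa using hγ 1))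

theorem segmentClass_comp (hB : Convex ℝ B) (hBW : B ⊆ W) {a b c : W} (ha : (a : E) ∈ B)
    (hb : (b : E) ∈ B) (hc : (c : E) ∈ B) (hab : segment ℝ (a : E) b ⊆ W)
    (hbc : segment ℝ (b : E) c ⊆ W) (hac : segment ℝ (a : E) c ⊆ W) :
    segmentClass a b hab ≫ segmentClass b c hbc = segmentClass a c hac :=
  fromPath_eq_segmentClass hB hBW (γ := (segmentPath a b hab).trans (segmentPath b c hbc))
    (fun t ↦ by
      rw [Path.trans_apply]
      split_ifs
      exacts [segmentPath_mem hB hab ha hb _, segmentPath_mem hB hbc hb hc _]) hac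

theorem segmentClass_self (a : W) (h : segment ℝ (a : E) a ⊆ W) :
    segmentClass a a h = 𝟙 (FundamentalGroupoid.mk a) :=
  (fromPath_eq_segmentClass (convex_singleton (a : E)) (by simp) (γ := .refl a) (by simp) h).symm

end SegmentClass

section Cells

open Complex ComplexOrder

/-- The closed unit square with upper right corner `v`. -/
def unitCell (v : ℂ) : Set ℂ := Icc (v.re - 1) v.re ×ℂ Icc (v.im - 1) v.im

/-- The union of the horizontal and vertical lines of the unit lattice `ℤ + ℤi`. -/
def gridLines : Set ℂ := {z | (∃ n : ℤ, z.re = n) ∨ ∃ n : ℤ, z.im = n}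

/-- The points preceding `v` when `ℂ` is ordered lexicographically by real and imaginary part. -/
def lexBelow (v : ℂ) : Set ℂ := {z | z.re < v.re ∨ z.re = v.re ∧ z.im < v.im}

theorem convex_unitCell (v : ℂ) : Convex ℝ (unitCell v) :=
  ((convex_Icc _ _).linear_preimage reLm).inter ((convex_Icc _ _).linear_preimage imLm)

theorem convex_lexBelow (v : ℂ) : Convex ℝ (lexBelow v) := by
  refine convex_iff_forall_pos.2 fun z hz w hw a b ha hb hab ↦ ?_
  have combo_lt {s t k : ℝ} (hs : s ≤ k) (ht : t ≤ k) (hst : s < k ∨ t < k) :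
      a * s + b * t < k := by
    obtain rfl : a = 1 - b := by linarith
    rcases hst with h | h <;> nlinarith
  simp only [lexBelow, mem_ofPred_eq, add_re, add_im, real_smul, re_ofReal_mul, im_ofReal_mul]
  rcases hz with hz | ⟨hz, hz'⟩ <;> rcases hw with hw | ⟨hw, hw'⟩
  · exact .inl (combo_lt hz.le hw.le (.inl hz))
  · exact .inl (combo_lt hz.le hw.le (.inl hz))
  · exact .inl (combo_lt hz.le hw.le (.inr hw))
  · exact .inr ⟨by rw [hz, hw, ← add_mul, hab, one_mul], combo_lt hz'.le hw'.le (.inl hz')⟩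

variable {v p z : ℂ}

theorem re_sub_of_div_eq_ofReal {r : ℝ} (hvp : v - p ≠ 0) (h : (z - p) / (v - p) = r) :
    z.re - p.re = r * (v.re - p.re) ∧ z.im - p.im = r * (v.im - p.im) := by
  rw [div_eq_iff hvp] at h
  simpa using And.intro (congrArg re h) (congrArg im h)

theorem not_le_zero_div_of_re_eq_or_im_eq (hre : p.re < v.re) (him : p.im < v.im)
    (hz : z.re = v.re ∨ z.im = v.im) : ¬(z - p) / (v - p) ≤ 0 := by
  intro h
  obtain ⟨hr, hr'⟩ := Complex.le_def.1 h
  have := re_sub_of_div_eq_ofReal (sub_ne_zero.2 fun h ↦ hre.ne' (congrArg re h))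
    (Complex.ext rfl hr' : (z - p) / (v - p) = (((z - p) / (v - p)).re : ℂ))
  rw [zero_re] at hr
  rcases hz with hz | hz <;> rw [hz] at this <;> nlinarith

theorem not_zero_le_div_of_mem_gridLines {m n : ℤ} (hm : v.re = m) (hn : v.im = n)
    (hre : p.re ∈ Ico (v.re - 1) v.re) (him : p.im ∈ Ico (v.im - 1) v.im) (hzp : z ≠ p)
    (hz : z ∈ gridLines) (hzv : z ∈ lexBelow v) : ¬0 ≤ (z - p) / (v - p) := by
  intro h
  obtain ⟨hr, hr'⟩ := Complex.le_def.1 h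
  have hvp : v - p ≠ 0 := sub_ne_zero.2 fun h ↦ hre.2.ne' (congrArg re h)
  have := re_sub_of_div_eq_ofReal hvp
    (Complex.ext rfl hr'.symm : (z - p) / (v - p) = (((z - p) / (v - p)).re : ℂ))
  have hr0 : ((z - p) / (v - p)).re ≠ 0 := fun h0 ↦ hzp <| by
    simpa [h0, sub_eq_zero, Complex.ext_iff] using this
  generalize ((z - p) / (v - p)).re = r at *
  replace hr : 0 < r := lt_of_le_of_ne hr hr0.symm
  have hr1 : r < 1 := by
    rcases hzv with hzv | ⟨-, hzv⟩ <;> nlinarith [hre.2, him.2]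
  have no_int {a : ℝ} {k l : ℤ} (h₁ : (k : ℝ) - 1 < a) (h₂ : a < k) (ha : a = l) : False := by
    subst ha
    norm_cast at h₁ h₂
    omega
  obtain ⟨h₁, h₂⟩ := hre
  obtain ⟨h₃, h₄⟩ := him
  rcases hz with ⟨k, hk⟩ | ⟨k, hk⟩
  · exact no_int (k := m) (by nlinarith) (by nlinarith) hk
  · exact no_int (k := n) (by nlinarith) (by nlinarith) hk

theorem mem_segment_sub_iff {w : ℂ} :
    z ∈ segment ℝ v (v - w) ↔ ∃ θ ∈ Icc (0 : ℝ) 1, z = v - θ * w := by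
  simp [segment_eq_image', eq_comm, sub_eq_add_neg]

theorem re_lt_and_im_lt_of_mem_unitCell {W : Set ℂ} (hp : p ∈ unitCell v) (hpW : p ∉ W)
    (h₁ : segment ℝ v (v - 1) ⊆ W) (h₂ : segment ℝ v (v - I) ⊆ W) :
    p.re < v.re ∧ p.im < v.im := by
  obtain ⟨⟨hre, hre'⟩, him, him'⟩ := hp
  refine ⟨hre'.lt_of_ne fun h ↦ hpW (h₂ ?_), him'.lt_of_ne fun h ↦ hpW (h₁ ?_)⟩
  · exact mem_segment_sub_iff.2 ⟨v.im - p.im, ⟨by linarith, by linarith⟩,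
      Complex.ext (by simp [h]) (by simp)⟩
  · exact mem_segment_sub_iff.2 ⟨v.re - p.re, ⟨by linarith, by linarith⟩,
      Complex.ext (by simp) (by simp [h])⟩

theorem not_hasLogOn_of_joinedIn {W : Set ℂ} {m n : ℤ} (hm : v.re = m) (hn : v.im = n)
    (hp : p ∈ unitCell v) (hpW : p ∉ W) (h₁ : segment ℝ v (v - 1) ⊆ W)
    (h₂ : segment ℝ v (v - I) ⊆ W)
    (hjoin : JoinedIn (W ∩ gridLines ∩ lexBelow v) (v - I) (v - 1)) :
    ¬HasLogOn (fun z ↦ z - p) W := by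
  intro hlog
  obtain ⟨hre, him⟩ := re_lt_and_im_lt_of_mem_unitCell hp hpW h₁ h₂
  have hvp : v - p ≠ 0 := sub_ne_zero.2 fun h ↦ hre.ne' (congrArg re h)
  have hN : 0 < normSq (v - p) := normSq_pos.2 hvp
  obtain ⟨γ, hγ⟩ := hjoin
  -- In the coordinate `f`, the ray from `p` through `v` is the negative real axis.
  set f : ℂ → ℂ := fun z ↦ -((z - p) / (v - p))
  have hf : HasLogOn f W := by
    simpa [f, div_eq_inv_mul] using hlog.const_mul (neg_ne_zero.2 (inv_ne_zero hvp))
  set K : Set ℂ := segment ℝ v (v - 1) ∪ segment ℝ v (v - I)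
  have hK : ∀ z ∈ K, z.re = v.re ∨ z.im = v.im := by
    rintro z (hz | hz) <;> obtain ⟨θ, -, rfl⟩ := mem_segment_sub_iff.1 hz <;> simp
  have hKpre : IsPreconnected K := (convex_segment ..).isPreconnected.union v
    (left_mem_segment ..) (left_mem_segment ..) (convex_segment ..).isPreconnected
  have hγKW : range γ ∪ K ⊆ W :=
    union_subset (range_subset_iff.2 fun t ↦ (hγ t).1.1) (union_subset h₁ h₂)
  refine not_hasLogOn_union (a := v - I) (b := v - 1) (isPreconnected_range γ.continuous) hKpre
    (by fun_prop) ?_ ?_ ⟨⟨0, by simp⟩, .inr (right_mem_segment ..)⟩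
    ⟨⟨1, by simp⟩, .inl (right_mem_segment ..)⟩ ?_ ?_ (hf.mono hγKW)
  · rintro _ ⟨t, rfl⟩
    obtain ⟨⟨hW, hgrid⟩, hlex⟩ := hγ t
    rw [mem_slitPlane_iff_not_le_zero, neg_nonpos]
    exact not_zero_le_div_of_mem_gridLines hm hn ⟨hp.1.1, hre⟩ ⟨hp.2.1, him⟩
      (ne_of_mem_of_not_mem hW hpW) hgrid hlex
  · intro z hz
    rw [mem_slitPlane_iff_not_le_zero, Pi.neg_apply, neg_neg]
    exact not_le_zero_div_of_re_eq_or_im_eq hre him (hK z hz)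
  · have : f (v - I) = (v - p)⁻¹ * I - 1 := by simp only [f]; field_simp; ring
    simpa [this] using div_pos (sub_pos.2 hre) hN
  · have : f (v - 1) = (v - p)⁻¹ - 1 := by simp only [f]; field_simp; ring
    simpa [this] using div_neg_of_neg_of_pos (sub_neg.2 him) hN

theorem unitCell_subset_of_joinedIn {v : ℂ} {W : Set ℂ} {m n : ℤ} (hW : IsOpen W)
    (hlog : ∀ p ∈ frontier W, HasLogOn (fun z ↦ z - p) W) (hm : v.re = m) (hn : v.im = n)
    (h₁ : segment ℝ v (v - 1) ⊆ W) (h₂ : segment ℝ v (v - I) ⊆ W)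
    (hjoin : JoinedIn (W ∩ gridLines ∩ lexBelow v) (v - I) (v - 1)) : unitCell v ⊆ W := by
  refine (convex_unitCell v).isPreconnected.subset_of_closure_inter_subset hW
    ⟨v, by simp [unitCell, mem_reProdIm], h₁ (left_mem_segment ..)⟩ fun p hp ↦ ?_
  by_contra hpW
  exact not_hasLogOn_of_joinedIn hm hn hp.2 hpW h₁ h₂ hjoin
    (hlog p (hW.frontier_eq ▸ ⟨hp.1, hpW⟩))

end Cells

section Grid

open CategoryTheory Complex

/-- The point of `ℂ` with natural number coordinates `u`. The lexicographic order on `ℕ × ℕ` is a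
well-order matching `lexBelow`. -/
def latticePoint (u : ℕ ×ₗ ℕ) : ℂ := ⟨(ofLex u).1, (ofLex u).2⟩

theorem latticePoint_mem_lexBelow {u v : ℕ ×ₗ ℕ} (h : u < v) :
    latticePoint u ∈ lexBelow (latticePoint v) := by
  simpa [latticePoint, lexBelow, Prod.Lex.lt_iff] using h

theorem latticePoint_eq_sub_of_lt {u v : ℕ ×ₗ ℕ} (h : u < v)
    (hd : dist (latticePoint u) (latticePoint v) = 1) :
    latticePoint u = latticePoint v - 1 ∨ latticePoint u = latticePoint v - I := by
  rw [dist_eq_re_im, Real.sqrt_eq_one] at hd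
  simp only [latticePoint, Complex.ext_iff, sub_re, sub_im, one_re, one_im, I_re, I_im] at hd ⊢
  rw [Prod.Lex.lt_iff] at h
  generalize (ofLex u).1 = a, (ofLex u).2 = b, (ofLex v).1 = c, (ofLex v).2 = d at *
  have hd' : ((a : ℤ) - c) ^ 2 + ((b : ℤ) - d) ^ 2 = 1 := mod_cast hd
  rcases h with h | ⟨rfl, h⟩
  · have hac : (a : ℤ) = c - 1 := by nlinarith
    have hbd : (b : ℤ) = d := by simpa [hac, sub_eq_zero] using hd'
    left
    exact ⟨mod_cast hac, by simpa using mod_cast hbd⟩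
  · have hbd : (b : ℤ) = d - 1 := by nlinarith
    right
    exact ⟨by simp, mod_cast hbd⟩

theorem latticePoint_injective : Function.Injective latticePoint := fun u v h ↦ by
  simpa [latticePoint, Complex.ext_iff, ← Prod.ext_iff] using h

theorem segment_latticePoint_subset_gridLines {u v : ℕ ×ₗ ℕ}
    (hd : dist (latticePoint u) (latticePoint v) = 1) :
    segment ℝ (latticePoint u) (latticePoint v) ⊆ gridLines := by
  wlog h : u < v generalizing u v
  · obtain rfl | h := (not_lt.1 h).eq_or_lt
    · simp at hd
    · exact segment_symm ℝ (latticePoint u) _ ▸ this (dist_comm (latticePoint u) _ ▸ hd) h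
  intro z hz
  rw [segment_symm] at hz
  rcases latticePoint_eq_sub_of_lt h hd with h | h <;> rw [h] at hz <;>
    obtain ⟨θ, -, rfl⟩ := mem_segment_sub_iff.1 hz
  · exact .inr ⟨(ofLex v).2, by simp [latticePoint]⟩
  · exact .inl ⟨(ofLex v).1, by simp [latticePoint]⟩

variable {W : Set ℂ}

/-- The points of `W` with natural number coordinates. -/
abbrev GridVertex (W : Set ℂ) : Type := {u : ℕ ×ₗ ℕ // latticePoint u ∈ W}

/-- The point of `W` represented by a grid vertex. -/
def gridPoint (u : GridVertex W) : W := ⟨latticePoint u, u.2⟩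

/-- The graph of the unit grid inside `W`: vertices at distance `1` are adjacent when the
segment between them does not leave `W`. -/
def gridGraph (W : Set ℂ) : SimpleGraph (GridVertex W) where
  Adj u w := dist (latticePoint u) (latticePoint w) = 1 ∧
    segment ℝ (latticePoint u) (latticePoint w) ⊆ W
  symm := ⟨fun _ _ h ↦ ⟨(dist_comm _ _).trans h.1, (segment_symm ..).trans_subset h.2⟩⟩
  loopless := ⟨fun _ h ↦ by simp at h⟩

/-- The homotopy class of an edge of `gridGraph W`. -/
noncomputable def edgeClass ⦃u w : GridVertex W⦄ (h : (gridGraph W).Adj u w) :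
    FundamentalGroupoid.mk (gridPoint u) ⟶ FundamentalGroupoid.mk (gridPoint w) :=
  segmentClass _ _ h.2

theorem joinedIn_of_walk {v a b : GridVertex W} (p : (gridGraph W).Walk a b)
    (hp : ∀ u ∈ p.support, u < v) :
    JoinedIn (W ∩ gridLines ∩ lexBelow (latticePoint v)) (latticePoint a) (latticePoint b) := by
  induction p with
  | @nil a =>
    exact .refl ⟨⟨a.2, .inl ⟨_, (Int.cast_natCast _).symm⟩⟩,
      latticePoint_mem_lexBelow (hp _ (by simp))⟩
  | @cons a c b h p ih =>
    simp only [SimpleGraph.Walk.support_cons, List.mem_cons, forall_eq_or_imp] at hp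
    have hlex := (convex_lexBelow (latticePoint v)).segment_subset
      (latticePoint_mem_lexBelow hp.1) (latticePoint_mem_lexBelow (hp.2 c (by simp)))
    exact (JoinedIn.of_segment_subset (subset_inter
      (subset_inter h.2 (segment_latticePoint_subset_gridLines h.1)) hlex)).trans (ih hp.2)

theorem edgeClass_comp_edgeClass_symm ⦃u w : GridVertex W⦄ (h : (gridGraph W).Adj u w) :
    edgeClass h ≫ edgeClass h.symm = 𝟙 (FundamentalGroupoid.mk (gridPoint u)) := by
  have huu : segment ℝ (gridPoint u : ℂ) (gridPoint u) ⊆ W := by simp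
  rw [← segmentClass_self _ huu]
  exact segmentClass_comp (convex_segment _ _) h.2 (left_mem_segment ..) (right_mem_segment ..)
    (left_mem_segment ..) _ _ _

theorem exists_latticePoint_eq_sub_one_sub_I {a b v : ℕ ×ₗ ℕ}
    (ha : latticePoint a = latticePoint v - 1) (hb : latticePoint b = latticePoint v - I) :
    ∃ c < v, latticePoint c = latticePoint v - 1 - I := by
  have hre : ((ofLex a).1 : ℝ) = (ofLex v).1 - 1 := congrArg re ha
  have him : ((ofLex b).2 : ℝ) = (ofLex v).2 - 1 := congrArg im hb
  refine ⟨toLex ((ofLex a).1, (ofLex b).2), Prod.Lex.lt_iff.2 (.inl ?_), ?_⟩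
  · exact (Nat.cast_lt (α := ℝ)).1 (by simp [hre])
  · simp [latticePoint, Complex.ext_iff, hre, him]

theorem exists_opposite_vertex (hW : IsOpen W)
    (hlog : ∀ p ∈ frontier W, HasLogOn (fun z ↦ z - p) W) {v a b : GridVertex W}
    (hva : (gridGraph W).Adj v a) (hvb : (gridGraph W).Adj v b) (q : (gridGraph W).Walk a b)
    (hab : a ≠ b) (hq : ∀ u ∈ q.support, u < v) :
    unitCell (latticePoint v) ⊆ W ∧ ∃ c < v.1, dist (latticePoint b) (latticePoint c) = 1 ∧
      dist (latticePoint c) (latticePoint a) = 1 ∧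
      {latticePoint a, latticePoint b, latticePoint c} ⊆ unitCell (latticePoint v) := by
  have ha_or := latticePoint_eq_sub_of_lt (hq a (by simp)) ((dist_comm _ _).trans hva.1)
  have hb_or := latticePoint_eq_sub_of_lt (hq b (by simp)) ((dist_comm _ _).trans hvb.1)
  have hab' : latticePoint a ≠ latticePoint b := fun h ↦
    hab (Subtype.ext (latticePoint_injective h))
  wlog hb : latticePoint b = latticePoint v - I generalizing a b
  · have ha := ha_or.resolve_left fun ha ↦ hab' (ha.trans (hb_or.resolve_right hb).symm)
    obtain ⟨hcell, c, hcv, hac, hcb, hsub⟩ :=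
      this hvb hva q.reverse hab.symm (by simpa using hq) hb_or ha_or hab'.symm ha
    exact ⟨hcell, c, hcv, (dist_comm _ _).trans hcb, (dist_comm _ _).trans hac,
      insert_comm (latticePoint a) _ _ ▸ hsub⟩
  have ha := ha_or.resolve_right fun ha ↦ hab' (ha.trans hb.symm)
  obtain ⟨c, hcv, hc⟩ := exists_latticePoint_eq_sub_one_sub_I ha hb
  refine ⟨unitCell_subset_of_joinedIn (m := (ofLex v.1).1) (n := (ofLex v.1).2) hW hlog rfl rfl
    (ha ▸ hva.2) (hb ▸ hvb.2) (ha ▸ hb ▸ (joinedIn_of_walk q hq).symm), c, hcv, ?_, ?_, ?_⟩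
  · simp [hb, hc]
  · simp [ha, hc]
  · simp [insert_subset_iff, ha, hb, hc, unitCell, mem_reProdIm]

theorem exists_edgeClass_comp_eq (hW : IsOpen W)
    (hlog : ∀ p ∈ frontier W, HasLogOn (fun z ↦ z - p) W) ⦃v a b : GridVertex W⦄
    (hva : (gridGraph W).Adj v a) (hbv : (gridGraph W).Adj b v) (q : (gridGraph W).Walk a b)
    (hab : a ≠ b) (hq : ∀ u ∈ q.support, u < v) :
    ∃ c < v, ∃ (hbc : (gridGraph W).Adj b c) (hca : (gridGraph W).Adj c a),
      edgeClass hbv ≫ edgeClass hva = edgeClass hbc ≫ edgeClass hca := by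
  obtain ⟨hcell, c, hcv, hbc, hca, hsub⟩ := exists_opposite_vertex hW hlog hva hbv.symm q hab hq
  simp only [insert_subset_iff, singleton_subset_iff] at hsub
  obtain ⟨ha, hb, hc⟩ := hsub
  have hv : latticePoint v ∈ unitCell (latticePoint v) := by simp [unitCell, mem_reProdIm]
  have hconv := convex_unitCell (latticePoint v)
  have hseg {z w : ℂ} (hz : z ∈ unitCell (latticePoint v)) (hw : w ∈ unitCell (latticePoint v)) :
      segment ℝ z w ⊆ W := (hconv.segment_subset hz hw).trans hcell
  refine ⟨⟨c, hcell hc⟩, hcv, ⟨hbc, hseg hb hc⟩, ⟨hca, hseg hc ha⟩, ?_⟩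
  exact (segmentClass_comp hconv hcell hb hv ha _ _ (hseg hb ha)).trans
    (segmentClass_comp hconv hcell hb hc ha _ _ _).symm

theorem walkHom_edgeClass_eq_id (hW : IsOpen W)
    (hlog : ∀ p ∈ frontier W, HasLogOn (fun z ↦ z - p) W) {u : GridVertex W}
    (p : (gridGraph W).Walk u u) : walkHom edgeClass p = 𝟙 (FundamentalGroupoid.mk (gridPoint u)) :=
  walkHom_eq_id_of_corner edgeClass_comp_edgeClass_symm (exists_edgeClass_comp_eq hW hlog) p

end Grid

section PathInduction

open CategoryTheory FundamentalGroupoid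

variable {X : Type*} [TopologicalSpace X]

theorem fromPath_induction {P : ∀ ⦃a b : X⦄, (mk a ⟶ mk b) → Prop}
    (hcomp : ∀ ⦃a b c : X⦄ (f : mk a ⟶ mk b) (g : mk b ⟶ mk c), P f → P g → P (f ≫ g))
    {a b : X} (γ : Path a b) {ι : Type*} {c : ι → Set X} (hc : ∀ i, IsOpen (c i))
    (hγ : range γ ⊆ ⋃ i, c i)
    (hsmall : ∀ ⦃x y : X⦄ (σ : Path x y) (i : ι), range σ ⊆ range γ → range σ ⊆ c i →
      P (fromPath (.mk σ))) : P (fromPath (.mk γ)) := by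
  obtain ⟨t, ht0, htmono, ⟨n, hn⟩, ht⟩ := exists_monotone_Icc_subset_open_cover_unitInterval
    (fun i ↦ (hc i).preimage γ.continuous) (by rwa [← preimage_iUnion, univ_subset_iff,
      preimage_eq_univ_iff])
  have hsub {s s' : unitInterval} {i : ι} (hs : s ≤ s') (hi : Icc s s' ⊆ γ ⁻¹' c i) :
      P (fromPath (.mk (γ.subpath s s'))) := by
    have hrange := Path.range_subpath_of_le γ s s' hs
    exact hsmall _ i (hrange ▸ image_subset_range ..) (hrange ▸ image_subset_iff.2 hi)
  have hind (k : ℕ) : P (fromPath (.mk (γ.subpath (t 0) (t k)))) := by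
    induction k with
    | zero =>
      obtain ⟨i, hi⟩ := ht 0
      exact hsub le_rfl ((Icc_subset_Icc_right (htmono zero_le_one)).trans hi)
    | succ k ih =>
      obtain ⟨i, hi⟩ := ht k
      have htrans := (fromPath_eq_iff_homotopic _ _).2
        ⟨Path.Homotopy.subpathTransSubpath γ (t 0) (t k) (t (k + 1))⟩
      exact htrans ▸ hcomp _ _ ih (hsub (htmono k.le_succ) hi)
  have huncast {x y : X} (hx : x = a) (hy : y = b) (h : P (fromPath (.mk (γ.cast hx hy)))) :
      P (fromPath (.mk γ)) := by
    subst hx hy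
    exact h
  have h := hind n
  rw [ht0, hn n le_rfl, Path.subpath_zero_one] at h
  exact huncast _ _ h

end PathInduction

section GridApproximation

open CategoryTheory Complex

variable {W : Set ℂ}

/-- The lattice point at the lower left corner of the unit square containing `z`; meaningful only
for `z` in the closed first quadrant. -/
noncomputable def latticeFloor (z : ℂ) : ℕ ×ₗ ℕ := toLex (⌊z.re⌋₊, ⌊z.im⌋₊)

theorem floor_eq_or_dist_floor_eq_one {x y : ℝ} (hx : 0 ≤ x) (hy : 0 ≤ y) (h : |x - y| < 1) :
    ⌊x⌋₊ = ⌊y⌋₊ ∨ dist (⌊x⌋₊ : ℝ) ⌊y⌋₊ = 1 := by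
  wlog hxy : x ≤ y generalizing x y
  · rw [eq_comm, dist_comm]
    exact this hy hx (abs_sub_comm x y ▸ h) (le_of_not_ge hxy)
  have h₁ : ⌊x⌋₊ ≤ ⌊y⌋₊ := Nat.floor_mono hxy
  have h₂ : ⌊y⌋₊ ≤ ⌊x⌋₊ + 1 := by
    rw [← Nat.floor_add_one hx]
    exact Nat.floor_mono (by linarith [neg_lt_of_abs_lt h])
  obtain h | h : ⌊x⌋₊ = ⌊y⌋₊ ∨ ⌊y⌋₊ = ⌊x⌋₊ + 1 := by omega
  · exact .inl h
  · exact .inr (by simp [h])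

theorem latticeFloor_eq_or_dist_eq_one_of_re_eq {z w : ℂ} (hz : 0 ≤ z.im) (hw : 0 ≤ w.im)
    (hre : z.re = w.re) (him : |z.im - w.im| < 1) : latticeFloor z = latticeFloor w ∨
      dist (latticePoint (latticeFloor z)) (latticePoint (latticeFloor w)) = 1 := by
  rw [Complex.dist_of_re_eq (by simp [latticePoint, latticeFloor, hre])]
  simpa [latticePoint, latticeFloor, hre] using floor_eq_or_dist_floor_eq_one hz hw him

theorem latticeFloor_eq_or_dist_eq_one_of_im_eq {z w : ℂ} (hz : 0 ≤ z.re) (hw : 0 ≤ w.re)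
    (hre : |z.re - w.re| < 1) (him : z.im = w.im) : latticeFloor z = latticeFloor w ∨
      dist (latticePoint (latticeFloor z)) (latticePoint (latticeFloor w)) = 1 := by
  rw [Complex.dist_of_im_eq (by simp [latticePoint, latticeFloor, him])]
  simpa [latticePoint, latticeFloor, him] using floor_eq_or_dist_floor_eq_one hz hw hre

theorem latticePoint_latticeFloor_mem_ball {a z : ℂ} (hz : 0 ≤ z.re) (hz' : 0 ≤ z.im)
    (hre : |z.re - a.re| < 1) (him : |z.im - a.im| < 1) :
    latticePoint (latticeFloor z) ∈ Metric.ball a 4 := by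
  have abs_floor_sub_lt {x y : ℝ} (hx : 0 ≤ x) (h : |x - y| < 1) : |(⌊x⌋₊ : ℝ) - y| < 2 := by
    have := Nat.floor_le hx
    have := Nat.lt_floor_add_one x
    rw [abs_lt] at h ⊢
    constructor <;> linarith
  rw [Metric.mem_ball, dist_eq]
  linarith [norm_le_abs_re_add_abs_im (latticePoint (latticeFloor z) - a),
    show |(latticePoint (latticeFloor z) - a).re| < 2 from abs_floor_sub_lt hz hre,
    show |(latticePoint (latticeFloor z) - a).im| < 2 from abs_floor_sub_lt hz' him]

theorem exists_walkHom_eq_segmentClass {u w : GridVertex W}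
    (h : u.1 = w.1 ∨ dist (latticePoint u) (latticePoint w) = 1)
    (huw : segment ℝ (latticePoint u) (latticePoint w) ⊆ W) :
    ∃ p : (gridGraph W).Walk u w,
      walkHom edgeClass p = segmentClass (gridPoint u) (gridPoint w) huw := by
  rcases h with h | h
  · obtain rfl := Subtype.ext h
    exact ⟨.nil, (segmentClass_self _ _).symm⟩
  · exact ⟨.cons ⟨h, huw⟩ .nil, Category.comp_id _⟩

/-- The points of `W` in the closed first quadrant that are so far from the complement of `W` that
`W` contains all nearby edges of the unit grid. -/
def gridInterior (W : Set ℂ) : Set W :=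
  {a | Metric.ball (a : ℂ) 4 ⊆ W ∧ 0 ≤ (a : ℂ).re ∧ 0 ≤ (a : ℂ).im}

theorem latticePoint_latticeFloor_mem_ball_self {a : W} (ha : a ∈ gridInterior W) :
    latticePoint (latticeFloor a) ∈ Metric.ball (a : ℂ) 4 :=
  latticePoint_latticeFloor_mem_ball ha.2.1 ha.2.2 (by simp) (by simp)

/-- The grid vertex at which points of `gridInterior W` are rounded. -/
noncomputable def floorVertex {a : W} (ha : a ∈ gridInterior W) : GridVertex W :=
  ⟨latticeFloor a, ha.1 (latticePoint_latticeFloor_mem_ball_self ha)⟩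

/-- The class of the straight segment from a point of `gridInterior W` to its `floorVertex`. -/
noncomputable def floorClass {a : W} (ha : a ∈ gridInterior W) :
    FundamentalGroupoid.mk a ⟶ FundamentalGroupoid.mk (gridPoint (floorVertex ha)) :=
  segmentClass _ _ <| ((convex_ball (a : ℂ) 4).segment_subset (Metric.mem_ball_self (by simp))
    (latticePoint_latticeFloor_mem_ball_self ha)).trans ha.1

/-- A morphism of the fundamental groupoid between points of `gridInterior W` is a walk class if it
is represented by a grid walk, after connecting the end points to their floor vertices. -/
def IsWalkClass ⦃a b : W⦄ (f : FundamentalGroupoid.mk a ⟶ FundamentalGroupoid.mk b) : Prop :=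
  ∃ (ha : a ∈ gridInterior W) (hb : b ∈ gridInterior W)
    (p : (gridGraph W).Walk (floorVertex ha) (floorVertex hb)),
      f ≫ floorClass hb = floorClass ha ≫ walkHom edgeClass p

theorem IsWalkClass.comp ⦃a b c : W⦄ (f : FundamentalGroupoid.mk a ⟶ FundamentalGroupoid.mk b)
    (g : FundamentalGroupoid.mk b ⟶ FundamentalGroupoid.mk c) (hf : IsWalkClass f)
    (hg : IsWalkClass g) : IsWalkClass (f ≫ g) := by
  obtain ⟨ha, hb, p, hp⟩ := hf
  obtain ⟨_, hc, q, hq⟩ := hg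
  exact ⟨ha, hc, p.append q, by rw [Category.assoc, hq, reassoc_of% hp, walkHom_append]⟩

theorem isWalkClass_segmentClass {a b : W} (ha : a ∈ gridInterior W) (hb : b ∈ gridInterior W)
    (hab : dist (a : ℂ) b < 1) (h : segment ℝ (a : ℂ) b ⊆ W) :
    IsWalkClass (segmentClass a b h) := by
  obtain ⟨haW, hre, him⟩ := id ha
  obtain ⟨-, hre', him'⟩ := id hb
  have hB := convex_ball (a : ℂ) 4
  have hdre : |(b : ℂ).re - (a : ℂ).re| < 1 :=
    (abs_re_le_norm (b - a : ℂ)).trans_lt (by rwa [← dist_eq, dist_comm])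
  have hdim : |(b : ℂ).im - (a : ℂ).im| < 1 :=
    (abs_im_le_norm (b - a : ℂ)).trans_lt (by rwa [← dist_eq, dist_comm])
  have haB : (a : ℂ) ∈ Metric.ball (a : ℂ) 4 := Metric.mem_ball_self (by simp)
  have hbB : (b : ℂ) ∈ Metric.ball (a : ℂ) 4 := Metric.mem_ball'.2 (by linarith)
  have ha'B := latticePoint_latticeFloor_mem_ball_self ha
  have hb'B := latticePoint_latticeFloor_mem_ball hre' him' hdre hdim
  have hmB := latticePoint_latticeFloor_mem_ball (z := ⟨(b : ℂ).re, (a : ℂ).im⟩) hre' him hdre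
    (by simp)
  have hseg {z w : ℂ} (hz : z ∈ Metric.ball (a : ℂ) 4) (hw : w ∈ Metric.ball (a : ℂ) 4) :
      segment ℝ z w ⊆ W := (hB.segment_subset hz hw).trans haW
  obtain ⟨p, hp⟩ := exists_walkHom_eq_segmentClass (u := floorVertex ha) (w := ⟨_, haW hmB⟩)
    (latticeFloor_eq_or_dist_eq_one_of_im_eq hre hre' ((abs_sub_comm _ _).trans_lt hdre) rfl)
    (hseg ha'B hmB)
  obtain ⟨q, hq⟩ := exists_walkHom_eq_segmentClass (u := ⟨_, haW hmB⟩) (w := floorVertex hb)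
    (latticeFloor_eq_or_dist_eq_one_of_re_eq him him' rfl ((abs_sub_comm _ _).trans_lt hdim))
    (hseg hmB hb'B)
  have hpq : walkHom edgeClass (p.append q) =
      segmentClass (gridPoint (floorVertex ha)) (gridPoint (floorVertex hb)) (hseg ha'B hb'B) := by
    rw [walkHom_append, hp, hq]
    exact segmentClass_comp hB haW ha'B hmB hb'B _ _ _
  refine ⟨ha, hb, p.append q, hpq ▸ ?_⟩
  exact (segmentClass_comp hB haW haB hbB hb'B _ _ (hseg haB hb'B)).trans
    (segmentClass_comp hB haW haB ha'B hb'B _ _ _).symm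

theorem isWalkClass_fromPath {a b : W} (γ : Path a b) (hγ : range γ ⊆ gridInterior W) :
    IsWalkClass (FundamentalGroupoid.fromPath (.mk γ)) := by
  refine fromPath_induction IsWalkClass.comp γ (c := fun x : W ↦ Metric.ball x (1 / 2))
    (fun x ↦ Metric.isOpen_ball) (fun x _ ↦ mem_iUnion.2 ⟨x, by simp⟩) fun x y σ z hσγ hσ ↦ ?_
  have hmem (t : unitInterval) : σ t ∈ gridInterior W := hγ (hσγ (mem_range_self t))
  have hdist (t : unitInterval) : dist (σ t : ℂ) x < 1 := by
    have h₀ : dist x z < 1 / 2 := by simpa using hσ (mem_range_self 0)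
    have h₁ : dist (σ t) z < 1 / 2 := by simpa using hσ (mem_range_self t)
    exact (dist_triangle_right (σ t) x z).trans_lt (by linarith)
  have hx : x ∈ gridInterior W := by simpa using hmem 0
  have hxy : dist (x : ℂ) y < 1 := by simpa [dist_comm] using hdist 1
  have hB (t : unitInterval) : (σ t : ℂ) ∈ Metric.ball (x : ℂ) 1 := hdist t
  have hBW : Metric.ball (x : ℂ) 1 ⊆ W := (Metric.ball_subset_ball (by norm_num)).trans hx.1
  have hseg : segment ℝ (x : ℂ) y ⊆ W := ((convex_ball (x : ℂ) 1).segment_subset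
    (by simp) (by simpa using hB 1)).trans hBW
  rw [fromPath_eq_segmentClass (convex_ball _ _) hBW hB hseg]
  exact isWalkClass_segmentClass hx (by simpa using hmem 1) hxy hseg

theorem homotopic_refl_of_range_subset_gridInterior (hW : IsOpen W)
    (hlog : ∀ p ∈ frontier W, HasLogOn (fun z ↦ z - p) W) {a : W} (γ : Path a a)
    (hγ : range γ ⊆ gridInterior W) : γ.Homotopic (.refl a) := by
  obtain ⟨ha, _, p, hp⟩ := isWalkClass_fromPath γ hγ
  rw [walkHom_edgeClass_eq_id hW hlog, Category.comp_id] at hp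
  rw [← FundamentalGroupoid.fromPath_eq_iff_homotopic, ← cancel_mono (floorClass ha), hp]
  exact (Category.id_comp _).symm

end GridApproximation

section Rescaling

open Complex

theorem homotopic_refl_of_homeomorph {X Y : Type*} [TopologicalSpace X] [TopologicalSpace Y]
    (e : X ≃ₜ Y) {x : X} {γ : Path x x} (h : (γ.map e.continuous).Homotopic (.refl (e x))) :
    γ.Homotopic (.refl x) := by
  obtain ⟨H⟩ := h
  exact ⟨{
    toFun := fun t ↦ e.symm (H t)
    map_zero_left := by simp
    map_one_left := by simp
    prop' := fun s t ht ↦ by simpa using congrArg e.symm (H.prop' s t ht) }⟩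

theorem exists_affine_ball_subset_image {K W : Set ℂ} (hK : IsCompact K) (hW : IsOpen W)
    (hKW : K ⊆ W) : ∃ c b : ℂ, ∃ hc : c ≠ 0, ∀ z ∈ K,
      Metric.ball (affineHomeomorph c b hc z) 4 ⊆ affineHomeomorph c b hc '' W ∧
        0 ≤ (affineHomeomorph c b hc z).re ∧ 0 ≤ (affineHomeomorph c b hc z).im := by
  obtain ⟨ε, hε, hεW⟩ := hK.exists_thickening_subset_open hW hKW
  obtain ⟨R, hR⟩ := hK.isBounded.exists_norm_le
  have hc : ((4 / ε : ℝ) : ℂ) ≠ 0 := by simp [hε.ne']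
  refine ⟨(4 / ε : ℝ), (4 / ε : ℝ) * ⟨R, R⟩, hc, fun z hz ↦ ⟨fun w hw ↦ ?_, ?_, ?_⟩⟩
  · obtain ⟨w, rfl⟩ := (affineHomeomorph _ ((4 / ε : ℝ) * ⟨R, R⟩ : ℂ) hc).surjective w
    refine mem_image_of_mem _ (hεW (Metric.mem_thickening_iff.2 ⟨z, hz, ?_⟩))
    rw [Metric.mem_ball, affineHomeomorph_apply, affineHomeomorph_apply, dist_add_right,
      dist_eq, ← mul_sub, norm_mul, norm_real, Real.norm_of_nonneg (by positivity)] at hw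
    rw [dist_eq]
    field_simp at hw
    linarith
  · have := neg_le_of_abs_le ((abs_re_le_norm z).trans (hR z hz))
    simp only [affineHomeomorph_apply, add_re, re_ofReal_mul, ← mul_add]
    exact mul_nonneg (by positivity) (by linarith)
  · have := neg_le_of_abs_le ((abs_im_le_norm z).trans (hR z hz))
    simp only [affineHomeomorph_apply, add_im, im_ofReal_mul, ← mul_add]
    exact mul_nonneg (by positivity) (by linarith)

theorem hasLogOn_sub_const_image_affineHomeomorph {W : Set ℂ} {p b c : ℂ} (hc : c ≠ 0)
    (h : HasLogOn (fun z ↦ z - p) W) :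
    HasLogOn (fun z ↦ z - affineHomeomorph c b hc p) (affineHomeomorph c b hc '' W) := by
  set e := affineHomeomorph c b hc
  have hmaps : MapsTo e.symm (e '' W) W := by simp [MapsTo]
  convert (h.comp e.symm.continuous.continuousOn hmaps).const_mul hc using 2 with z
  obtain ⟨z, rfl⟩ := e.surjective z
  rw [Function.comp_apply, e.symm_apply_apply]
  simp [e, mul_sub]

theorem simplyConnectedSpace_of_hasLogOn {W : Set ℂ} (hW : IsOpen W) (hconn : IsConnected W)
    (hlog : ∀ p ∈ frontier W, HasLogOn (fun z ↦ z - p) W) : SimplyConnectedSpace W := by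
  refine simply_connected_iff_loops_nullhomotopic.2
    ⟨isPathConnected_iff_pathConnectedSpace.1 (hW.isConnected_iff_isPathConnected.1 hconn),
      fun {x} γ ↦ ?_⟩
  obtain ⟨c, b, hc, hK⟩ := exists_affine_ball_subset_image
    (isCompact_range (continuous_subtype_val.comp γ.continuous)) hW
    (range_subset_iff.2 fun t ↦ (γ t).2)
  set e := affineHomeomorph c b hc
  refine homotopic_refl_of_homeomorph (e.image W) ?_
  refine homotopic_refl_of_range_subset_gridInterior (e.isOpenMap W hW) ?_ _ ?_
  · rw [← e.image_frontier]
    rintro _ ⟨p, hp, rfl⟩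
    exact hasLogOn_sub_const_image_affineHomeomorph hc (hlog p hp)
  · rintro _ ⟨t, rfl⟩
    exact hK _ (mem_range_self t)

end Rescaling

theorem disjoint_frontier_connectedComponentIn {X : Type*} [TopologicalSpace X]
    [LocallyConnectedSpace X] {F : Set X} (hF : IsOpen F) (x : X) :
    Disjoint (frontier (connectedComponentIn F x)) F := by
  rw [hF.connectedComponentIn.frontier_eq, disjoint_left]
  rintro p ⟨hp, hpx⟩ hpF
  obtain ⟨q, hqp, hqx⟩ := mem_closure_iff.1 hp _ hF.connectedComponentIn
    (mem_connectedComponentIn hpF)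
  rw [connectedComponentIn_eq hqx, ← connectedComponentIn_eq hqp] at hpx
  exact hpx (mem_connectedComponentIn hpF)

/-- If `U` and `V` are open, simply connected subsets of the plane `ℂ`,
then every connected component of `U ∩ V` (as a topological subspace) is simply connected. -/
theorem component_of_inter_simplyConnected (U V : Set ℂ)
    (hUopen : IsOpen U) (hVopen : IsOpen V)
    (hU : SimplyConnectedSpace U) (hV : SimplyConnectedSpace V) :
    ∀ x ∈ U ∩ V, SimplyConnectedSpace (connectedComponentIn (U ∩ V) x) := by
  intro x hx
  have hUV := hUopen.inter hVopen
  have hsub := connectedComponentIn_subset (U ∩ V) x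
  refine simplyConnectedSpace_of_hasLogOn hUV.connectedComponentIn
    (isConnected_connectedComponentIn_iff.2 hx) fun p hp ↦ ?_
  have hpUV : p ∉ U ∩ V := (disjoint_frontier_connectedComponentIn hUV x).notMem_of_mem_left hp
  rcases not_and_or.1 hpUV with hpU | hpV
  · exact (hasLogOn_sub_const hU hUopen hpU).mono (hsub.trans inter_subset_left)
  · exact (hasLogOn_sub_const hV hVopen hpV).mono (hsub.trans inter_subset_right)
end
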